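/- arXiv:2310.16422 — 2 statements merged into one kernel-verified Lean document; each statement's English description precedes it below -/
import Mathlib

section
/- Let α₁, α₂, β₁, β₂ : X ⇉ Y be m-continuous m-functions. If α₁ ≃_m α₂ and β₁ ≃_m β₂, then D^m(α₁,β₁) = D^m(α₂,β₂). -/
/-!
An m-continuous m-function `A ⇉ B` is the same thing as a continuous map from `A` to the space of
nonempty subsets of `B` with the Vietoris topology (`mContinuous_iff_continuous`), so m-homotopy is
ordinary homotopy of such maps (`mHomotopic_iff`). Hence m-homotopy is symmetric and transitive and
is preserved by restriction to subspaces. If `α₁ ≃ α₂` and `β₁ ≃ β₂`, then on any set `C` where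
`α₁ ≃ β₁` one gets `α₂ ≃ α₁ ≃ β₁ ≃ β₂`, so the two pairs admit the same open covers.
-/

/-- An m-function assigns to each point a nonempty subset. -/
def IsMFun {A B : Type*} (F : A → Set B) : Prop :=
  ∀ a, (F a).Nonempty

/-- Upper semicontinuity of a multi-valued function. -/
def UpperSC {A B : Type*} [TopologicalSpace A] [TopologicalSpace B]
    (F : A → Set B) : Prop :=
  ∀ V : Set B, IsOpen V → IsOpen {a : A | F a ⊆ V}

/-- Lower semicontinuity of a multi-valued function. -/
def LowerSC {A B : Type*} [TopologicalSpace A] [TopologicalSpace B]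
    (F : A → Set B) : Prop :=
  ∀ V : Set B, IsOpen V → IsOpen {a : A | (F a ∩ V).Nonempty}

/-- m-continuity: both upper and lower semicontinuous. -/
def MContinuous {A B : Type*} [TopologicalSpace A] [TopologicalSpace B]
    (F : A → Set B) : Prop :=
  UpperSC F ∧ LowerSC F

/-- Composition of multi-valued functions: (β ∘ α)(a) = ⋃_{b ∈ α(a)} β(b). -/
def MComp {A B C : Type*} (G : B → Set C) (F : A → Set B) : A → Set C :=
  fun a => ⋃ b ∈ F a, G b

/-- The m-identity map 1_A(a) = {a}. -/
def MId (A : Type*) : A → Set A := fun a => {a}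

/-- Two m-functions are m-homotopic if they are connected by an m-continuous
m-homotopy γ : A × [0,1] ⇉ B. -/
def MHomotopic {A B : Type*} [TopologicalSpace A] [TopologicalSpace B]
    (F G : A → Set B) : Prop :=
  ∃ γ : A × unitInterval → Set B, IsMFun γ ∧ MContinuous γ ∧
    (∀ a, γ (a, 0) = F a) ∧ (∀ a, γ (a, 1) = G a)

/-- Null m-homotopic: m-homotopic to an m-constant map. -/
def MNullHomotopic {A B : Type*} [TopologicalSpace A] [TopologicalSpace B]
    (F : A → Set B) : Prop :=
  ∃ S : Set B, S.Nonempty ∧ MHomotopic F (fun _ => S)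

/-- m-contractible: the m-identity is null m-homotopic. -/
def MContractible (A : Type*) [TopologicalSpace A] : Prop :=
  MNullHomotopic (MId A)

/-- An m-homotopy equivalence. -/
def MHomotopyEquiv {A B : Type*} [TopologicalSpace A] [TopologicalSpace B]
    (F : A → Set B) : Prop :=
  IsMFun F ∧ MContinuous F ∧ ∃ G : B → Set A, IsMFun G ∧ MContinuous G ∧
    MHomotopic (MComp G F) (MId A) ∧ MHomotopic (MComp F G) (MId B)

/-- Surjectivity of an m-function. -/
def MSurjective {A B : Type*} (F : A → Set B) : Prop :=
  (⋃ a, F a) = Set.univ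

/-- m-pathwise connectedness: any two nonempty closed subsets are joined by an
m-continuous m-path. -/
def MPathConnected (X : Type*) [TopologicalSpace X] : Prop :=
  ∀ A₀ A₁ : Set X, A₀.Nonempty → A₁.Nonempty → IsClosed A₀ → IsClosed A₁ →
    ∃ α : unitInterval → Set X, IsMFun α ∧ MContinuous α ∧ α 0 = A₀ ∧ α 1 = A₁

/-- The m-homotopy lifting property with respect to a space `W`. -/
def MHLP {A B : Type*} [TopologicalSpace A] [TopologicalSpace B]
    (ρ : A → Set B) (W : Type*) [TopologicalSpace W] : Prop :=
  ∀ α : W → Set A, IsMFun α → MContinuous α →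
  ∀ β : W × unitInterval → Set B, IsMFun β → MContinuous β →
    (∀ w, β (w, 0) = MComp ρ α w) →
    ∃ η : W × unitInterval → Set A, IsMFun η ∧ MContinuous η ∧
      (∀ w, η (w, 0) = α w) ∧ (∀ p, MComp ρ η p = β p)

/-- An m-fibration: an m-continuous m-function with the m-homotopy lifting
property with respect to every topological space. -/
def MFibration {A B : Type*} [TopologicalSpace A] [TopologicalSpace B]
    (ρ : A → Set B) : Prop :=
  IsMFun ρ ∧ MContinuous ρ ∧
    ∀ (W : Type*) [TopologicalSpace W], MHLP ρ W

/-- The m-homotopic distance between two m-functions. -/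
noncomputable def mDist {X Y : Type*} [TopologicalSpace X] [TopologicalSpace Y]
    (F G : X → Set Y) : ℕ∞ :=
  sInf {n : ℕ∞ | ∃ s : ℕ, n = s ∧ 1 ≤ s ∧ ∃ C : Fin s → Set X,
    (∀ i, IsOpen (C i)) ∧ (⋃ i, C i) = Set.univ ∧
    ∀ i, MHomotopic (fun c : C i => F c.1) (fun c : C i => G c.1)}

/-- Topological multi-complexity of a space. -/
noncomputable def tmc (X : Type*) [TopologicalSpace X] : ℕ∞ :=
  mDist (fun p : X × X => ({p.1} : Set X)) (fun p : X × X => ({p.2} : Set X))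

/-- Topological multi-complexity of a (surjective) m-fibration `α : X ⇉ Y`. -/
noncomputable def tmcMap {X Y : Type*} [TopologicalSpace X] [TopologicalSpace Y]
    (α : X → Set Y) : ℕ∞ :=
  mDist (MComp α (fun p : X × Y => ({p.1} : Set X)))
    (fun p : X × Y => ({p.2} : Set Y))

/-- Lusternik–Schnirelmann multi-category of a space. -/
noncomputable def catm (X : Type*) [TopologicalSpace X] : ℕ∞ :=
  sInf {n : ℕ∞ | ∃ s : ℕ, n = s ∧ 1 ≤ s ∧ ∃ D : Fin s → Set X,
    (∀ i, IsOpen (D i)) ∧ (⋃ i, D i) = Set.univ ∧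
    ∀ i, MNullHomotopic (fun d : D i => ({d.1} : Set X))}

/-- Lusternik–Schnirelmann multi-category of an m-function `α : X ⇉ Y`. -/
noncomputable def catmMap {X Y : Type*} [TopologicalSpace X] [TopologicalSpace Y]
    (α : X → Set Y) : ℕ∞ :=
  sInf {n : ℕ∞ | ∃ s : ℕ, n = s ∧ 1 ≤ s ∧ ∃ D : Fin s → Set X,
    (∀ i, IsOpen (D i)) ∧ (⋃ i, D i) = Set.univ ∧
    ∀ i, MNullHomotopic (fun d : D i => α d.1)}
section Vietoris

attribute [local instance] TopologicalSpace.vietoris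

theorem mContinuous_iff_continuous {A B : Type*} [TopologicalSpace A] [TopologicalSpace B]
    {F : A → Set B} : MContinuous F ↔ Continuous F := by
  constructor
  · rintro ⟨hu, hl⟩
    refine continuous_generateFrom_iff.2 ?_
    rintro _ (⟨V, hV, rfl⟩ | ⟨V, hV, rfl⟩)
    · exact hu V hV
    · exact hl V hV
  · exact fun h => ⟨fun V hV => hV.powerset_vietoris.preimage h, fun V hV =>
      (TopologicalSpace.vietoris.isOpen_inter_nonempty_of_isOpen hV).preimage h⟩

/-- m-homotopies are ordinary homotopies of maps into the space of nonempty subsets of `B`,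
topologized as a subspace of the Vietoris space `Set B`. -/
theorem mHomotopic_iff {A B : Type*} [TopologicalSpace A] [TopologicalSpace B]
    {F G : A → Set B} : MHomotopic F G ↔ ∃ f g : C(A, {S : Set B // S.Nonempty}),
      (∀ a, (f a : Set B) = F a) ∧ (∀ a, (g a : Set B) = G a) ∧ f.Homotopic g := by
  constructor
  · rintro ⟨γ, hne, hγ, h0, h1⟩
    have hc : Continuous fun p : A × unitInterval => (⟨γ p, hne p⟩ : {S : Set B // S.Nonempty}) :=
      (mContinuous_iff_continuous.1 hγ).subtype_mk hne
    exact ⟨⟨fun a => ⟨γ (a, 0), hne _⟩, hc.comp (Continuous.prodMk_left 0)⟩,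
      ⟨fun a => ⟨γ (a, 1), hne _⟩, hc.comp (Continuous.prodMk_left 1)⟩, h0, h1,
      ⟨{ toFun := fun p => ⟨γ p.swap, hne _⟩
         continuous_toFun := hc.comp continuous_swap
         map_zero_left := fun _ => rfl
         map_one_left := fun _ => rfl }⟩⟩
  · rintro ⟨f, g, hf, hg, ⟨H⟩⟩
    refine ⟨fun p => H p.swap, fun p => (H p.swap).2, mContinuous_iff_continuous.2 ?_, ?_, ?_⟩
    · exact continuous_subtype_val.comp (H.continuous.comp continuous_swap)
    · intro a
      simp [hf]
    · intro a
      simp [hg]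

theorem MHomotopic.symm {A B : Type*} [TopologicalSpace A] [TopologicalSpace B]
    {F G : A → Set B} (h : MHomotopic F G) : MHomotopic G F := by
  obtain ⟨f, g, hf, hg, H⟩ := mHomotopic_iff.1 h
  exact mHomotopic_iff.2 ⟨g, f, hg, hf, H.symm⟩

theorem MHomotopic.trans {A B : Type*} [TopologicalSpace A] [TopologicalSpace B]
    {F G K : A → Set B} (h : MHomotopic F G) (h' : MHomotopic G K) : MHomotopic F K := by
  obtain ⟨f, g, hf, hg, H⟩ := mHomotopic_iff.1 h
  obtain ⟨g', k, hg', hk, H'⟩ := mHomotopic_iff.1 h'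
  obtain rfl : g = g' := by
    ext1 a
    exact Subtype.ext ((hg a).trans (hg' a).symm)
  exact mHomotopic_iff.2 ⟨f, k, hf, hk, H.trans H'⟩

theorem MHomotopic.restrict {A B : Type*} [TopologicalSpace A] [TopologicalSpace B]
    {F G : A → Set B} (h : MHomotopic F G) (C : Set A) :
    MHomotopic (fun c : C => F c.1) (fun c : C => G c.1) := by
  obtain ⟨f, g, hf, hg, H⟩ := mHomotopic_iff.1 h
  exact mHomotopic_iff.2 ⟨f.restrict C, g.restrict C, fun c => hf c, fun c => hg c,
    H.comp (.refl ⟨Subtype.val, continuous_subtype_val⟩)⟩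

end Vietoris

/-- Every open cover admissible for `(α₁, β₁)` is admissible for `(α₂, β₂)`. -/
theorem mDist_le_of_mHomotopic {X Y : Type*} [TopologicalSpace X] [TopologicalSpace Y]
    {α₁ α₂ β₁ β₂ : X → Set Y} (hα : MHomotopic α₁ α₂) (hβ : MHomotopic β₁ β₂) :
    mDist α₂ β₂ ≤ mDist α₁ β₁ := by
  refine sInf_le_sInf ?_
  rintro n ⟨s, hn, hs, C, hC, hcov, h⟩
  exact ⟨s, hn, hs, C, hC, hcov, fun i =>
    ((hα.restrict (C i)).symm.trans (h i)).trans (hβ.restrict (C i))⟩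

/-- The m-homotopic distance only depends on the m-homotopy classes. -/
theorem mDist_congr {X Y : Type*} [TopologicalSpace X] [TopologicalSpace Y]
    (α₁ α₂ β₁ β₂ : X → Set Y)
    (hα₁m : IsMFun α₁) (hα₂m : IsMFun α₂) (hβ₁m : IsMFun β₁) (hβ₂m : IsMFun β₂)
    (hα₁ : MContinuous α₁) (hα₂ : MContinuous α₂)
    (hβ₁ : MContinuous β₁) (hβ₂ : MContinuous β₂)
    (hα : MHomotopic α₁ α₂) (hβ : MHomotopic β₁ β₂) :
    mDist α₁ β₁ = mDist α₂ β₂ := by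
  exact le_antisymm (mDist_le_of_mHomotopic hα.symm hβ.symm)
    (mDist_le_of_mHomotopic hα hβ)
end

section
/- Let α, β : X ⇉ Y and η : Y ⇉ Z be m-continuous m-functions. Then D^m(η ∘ α, η ∘ β) ≤ D^m(α, β). -/
theorem IsMFun.mComp {A B C : Type*} {G : B → Set C} {F : A → Set B}
    (hG : IsMFun G) (hF : IsMFun F) : IsMFun (MComp G F) := by
  intro a
  obtain ⟨b, hb⟩ := hF a
  obtain ⟨c, hc⟩ := hG b
  exact ⟨c, Set.mem_biUnion hb hc⟩

/-- The upper (resp. lower) preimage of an open `V` under `G ∘ F` is the upper (resp. lower)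
preimage under `F` of the open upper (resp. lower) preimage of `V` under `G`. -/
theorem MContinuous.mComp {A B C : Type*} [TopologicalSpace A] [TopologicalSpace B]
    [TopologicalSpace C] {G : B → Set C} {F : A → Set B}
    (hG : MContinuous G) (hF : MContinuous F) : MContinuous (MComp G F) := by
  constructor
  · intro V hV
    convert hF.1 _ (hG.1 V hV) using 1
    ext a
    exact Set.iUnion₂_subset_iff
  · intro V hV
    convert hF.2 _ (hG.2 V hV) using 1
    ext a
    simp only [MComp, Set.mem_setOf_eq, Set.Nonempty, Set.mem_inter_iff, Set.mem_iUnion]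
    constructor
    · rintro ⟨c, ⟨b, hb, hc⟩, hcV⟩
      exact ⟨b, hb, c, hc, hcV⟩
    · rintro ⟨b, hb, c, hc, hcV⟩
      exact ⟨c, ⟨b, hb, hc⟩, hcV⟩

theorem MHomotopic.mComp_left {A B C : Type*} [TopologicalSpace A] [TopologicalSpace B]
    [TopologicalSpace C] {F G : A → Set B} {η : B → Set C} (hηm : IsMFun η)
    (hη : MContinuous η) (h : MHomotopic F G) : MHomotopic (MComp η F) (MComp η G) := by
  obtain ⟨γ, hγm, hγ, h0, h1⟩ := h
  exact ⟨MComp η γ, hηm.mComp hγm, hη.mComp hγ,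
    fun a => by simp only [MComp, h0], fun a => by simp only [MComp, h1]⟩

/-- D^m(η ∘ α, η ∘ β) ≤ D^m(α, β). -/
theorem mDist_comp_left_le {X Y Z : Type*}
    [TopologicalSpace X] [TopologicalSpace Y] [TopologicalSpace Z]
    (α β : X → Set Y) (η : Y → Set Z)
    (hαm : IsMFun α) (hβm : IsMFun β) (hηm : IsMFun η)
    (hα : MContinuous α) (hβ : MContinuous β) (hη : MContinuous η) :
    mDist (MComp η α) (MComp η β) ≤ mDist α β := by
  apply sInf_le_sInf
  rintro n ⟨s, hn, hs, C, hCo, hCu, hC⟩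
  exact ⟨s, hn, hs, C, hCo, hCu, fun i => (hC i).mComp_left hηm hη⟩
end
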